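/- arXiv:1006.5617 — 2 statements merged into one kernel-verified Lean document; each statement's English description precedes it below -/
import Mathlib

section
/- (Theorem 1, assertion 1, sufficiency for M^{m−n}) Suppose L(t) := M'(t) + M(t)Q(t) − Q(t)M(t) = 0 for all t ∈ ℝ. Let y : ℝ → ℝ^m be differentiable with y'(t) = Q(t)·y(t) for all t, and suppose y(t₀) = (E − M(t₀))·c for some t₀ ∈ ℝ and c ∈ ℝ^m. Then M(t)·y(t) = 0 for all t ∈ ℝ. -/
open Matrix

/-!
The condition `L = 0` says that `M' = QM - MQ`, so along a solution of `y' = Qy` the product rule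
gives `(My)' = M'y + MQy = Q(My)`: the curve `My` solves the same linear equation as `y`. If it
vanishes at `t₀`, it vanishes identically by uniqueness. At `t₀` it does vanish, because
`M(E - M) = 0` for the idempotent `M = Φ⁺Φ`. The uniqueness argument needs no coordinates and
applies to bounded operators on any real normed space.
-/

theorem exists_lipschitzWith_clm_of_isCompact {𝕜 X E F : Type*} [NontriviallyNormedField 𝕜]
    [TopologicalSpace X] [SeminormedAddCommGroup E] [NormedSpace 𝕜 E] [SeminormedAddCommGroup F]
    [NormedSpace 𝕜 F] {A : X → E →L[𝕜] F} {s : Set X} (hs : IsCompact s) (hA : ContinuousOn A s) :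
    ∃ K, ∀ x ∈ s, LipschitzWith K (A x) := by
  obtain ⟨K, hK⟩ := hs.bddAbove_image hA.nnnorm
  exact ⟨K, fun x hx => (A x).lipschitz.weaken (hK (Set.mem_image_of_mem _ hx))⟩

theorem linearODE_solution_unique {E : Type*} [NormedAddCommGroup E] [NormedSpace ℝ E]
    {A : ℝ → E →L[ℝ] E} (hA : Continuous A) {y z : ℝ → E}
    (hy : ∀ t, HasDerivAt y (A t (y t)) t) (hz : ∀ t, HasDerivAt z (A t (z t)) t) {t₀ : ℝ}
    (heq : y t₀ = z t₀) : y = z := by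
  funext t
  let a := min t t₀ - 1
  let b := max t t₀ + 1
  have ht : t ∈ Set.Ioo a b := by grind
  have ht₀ : t₀ ∈ Set.Ioo a b := by grind
  obtain ⟨K, hK⟩ := exists_lipschitzWith_clm_of_isCompact (isCompact_Icc (a := a) (b := b))
    hA.continuousOn
  exact ODE_solution_unique_of_mem_Ioo (s := fun _ => Set.univ)
    (fun s hs => (hK s (Set.Ioo_subset_Icc_self hs)).lipschitzOnWith) ht₀
    (fun s _ => ⟨hy s, trivial⟩) (fun s _ => ⟨hz s, trivial⟩) heq ht

theorem hasDerivAt_clm_apply_of_commutator {𝕜 F : Type*} [NontriviallyNormedField 𝕜]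
    [NormedAddCommGroup F] [NormedSpace 𝕜 F] {P : 𝕜 → F →L[𝕜] F} {P' Q : F →L[𝕜] F} {y : 𝕜 → F}
    {t : 𝕜} (hP : HasDerivAt P P' t) (hL : P' + P t * Q - Q * P t = 0)
    (hy : HasDerivAt y (Q (y t)) t) :
    HasDerivAt (fun s => P s (y s)) (Q (P t (y t))) t := by
  have hcomm : P' (y t) + P t (Q (y t)) = Q (P t (y t)) :=
    DFunLike.congr_fun (sub_eq_zero.mp hL) (y t)
  exact (hP.clm_apply hy).congr_deriv hcomm

section MatrixToCLM

variable {𝕜 ι : Type*} [NontriviallyNormedField 𝕜] [CompleteSpace 𝕜] [Fintype ι] [DecidableEq ι]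

variable (𝕜 ι) in
/-- Square matrices as bounded operators on column vectors, acting by `*ᵥ`. It is bundled as an
algebra equivalence so that identities between matrices transfer to operators by `map_mul` and the
like. -/
noncomputable def matrixToCLM : Matrix ι ι 𝕜 ≃ₐ[𝕜] ((ι → 𝕜) →L[𝕜] (ι → 𝕜)) :=
  Matrix.toLinAlgEquiv'.trans (Module.End.toContinuousLinearMap (ι → 𝕜))

theorem continuous_matrixToCLM_of_entries {X : Type*} [TopologicalSpace X] {A : X → Matrix ι ι 𝕜}
    (hA : ∀ i j, Continuous fun x => A x i j) : Continuous fun x => matrixToCLM 𝕜 ι (A x) :=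
  (matrixToCLM 𝕜 ι).toLinearMap.continuous_of_finiteDimensional.comp (continuous_matrix hA)

open scoped Matrix.Norms.Elementwise in
theorem hasDerivAt_matrixToCLM_of_entries {A : 𝕜 → Matrix ι ι 𝕜} {A' : Matrix ι ι 𝕜} {t : 𝕜}
    (hA : ∀ i j, HasDerivAt (fun s => A s i j) (A' i j) t) :
    HasDerivAt (fun s => matrixToCLM 𝕜 ι (A s)) (matrixToCLM 𝕜 ι A') t :=
  (matrixToCLM 𝕜 ι).toLinearMap.toContinuousLinearMap.hasFDerivAt.comp_hasDerivAt t
    (hasDerivAt_pi.mpr fun i => hasDerivAt_pi.mpr (hA i))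

end MatrixToCLM

section Idempotent

variable {R m n : Type*} [Fintype m] [Fintype n] [DecidableEq n]

theorem isIdempotentElem_mul_of_mul_eq_one [Semiring R] {A : Matrix n m R} {B : Matrix m n R}
    (hAB : A * B = 1) : IsIdempotentElem (B * A) := by
  rw [IsIdempotentElem, Matrix.mul_assoc, ← Matrix.mul_assoc A, hAB, Matrix.one_mul]

theorem mulVec_one_sub_mulVec_eq_zero [Ring R] [DecidableEq m] {P : Matrix m m R}
    (hP : IsIdempotentElem P) (c : m → R) : P *ᵥ ((1 - P) *ᵥ c) = 0 := by
  rw [mulVec_mulVec, hP.mul_one_sub_self, zero_mulVec]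

end Idempotent

theorem invariance_of_Mmn_of_L_eq_zero_general {E : Type*} [NormedAddCommGroup E]
    [NormedSpace ℝ E] {Q P P' : ℝ → E →L[ℝ] E} (hQ : Continuous Q)
    (hP : ∀ t, HasDerivAt P (P' t) t) (hL : ∀ t, P' t + P t * Q t - Q t * P t = 0) {y : ℝ → E}
    (hy : ∀ t, HasDerivAt y (Q t (y t)) t) {t₀ : ℝ} (hinit : P t₀ (y t₀) = 0) (t : ℝ) :
    P t (y t) = 0 := by
  have hPy : ∀ s, HasDerivAt (fun s => P s (y s)) (Q s (P s (y s))) s := fun s =>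
    hasDerivAt_clm_apply_of_commutator (hP s) (hL s) (hy s)
  have hzero : ∀ s, HasDerivAt (fun _ => (0 : E)) (Q s 0) s := fun s =>
    (hasDerivAt_const s 0).congr_deriv (map_zero (Q s)).symm
  exact congrFun (linearODE_solution_unique hQ hPy hzero hinit) t

/-- Theorem 1, assertion 1, sufficiency for `M^{m-n}`: if
`L(t) = M'(t) + M(t)Q(t) - Q(t)M(t) = 0` for all `t`, then any solution of `y' = Q(t)y`
starting in `M^{m-n}(t₀)` satisfies `M(t)y(t) = 0` for all `t`. -/
theorem invariance_of_Mmn_of_L_eq_zero (m n : ℕ) (hn : 1 ≤ n) (hnm : n < m)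
    (Q : ℝ → Matrix (Fin m) (Fin m) ℝ)
    (Φ : ℝ → Matrix (Fin n) (Fin m) ℝ) (Φp : ℝ → Matrix (Fin m) (Fin n) ℝ)
    (Φ' : ℝ → Matrix (Fin n) (Fin m) ℝ) (Φp' : ℝ → Matrix (Fin m) (Fin n) ℝ)
    (hQ : ∀ i j, Continuous fun t => Q t i j)
    (hΦ : ∀ t i j, HasDerivAt (fun s => Φ s i j) (Φ' t i j) t)
    (hΦc : ∀ i j, Continuous fun t => Φ' t i j)
    (hΦp : ∀ t i j, HasDerivAt (fun s => Φp s i j) (Φp' t i j) t)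
    (hΦpc : ∀ i j, Continuous fun t => Φp' t i j)
    (hpseudo : ∀ t, Φ t * Φp t = 1)
    (M M' : ℝ → Matrix (Fin m) (Fin m) ℝ)
    (hM : ∀ t, M t = Φp t * Φ t)
    (hM' : ∀ t i j, HasDerivAt (fun s => M s i j) (M' t i j) t)
    (hL : ∀ t, M' t + M t * Q t - Q t * M t = 0)
    (y : ℝ → Fin m → ℝ)
    (hy : ∀ t, HasDerivAt y (Q t *ᵥ y t) t)
    (t₀ : ℝ) (c : Fin m → ℝ) (hinit : y t₀ = (1 - M t₀) *ᵥ c) :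
    ∀ t : ℝ, M t *ᵥ y t = 0 := by
  have hidem : IsIdempotentElem (M t₀) := hM t₀ ▸ isIdempotentElem_mul_of_mul_eq_one (hpseudo t₀)
  exact invariance_of_Mmn_of_L_eq_zero_general (continuous_matrixToCLM_of_entries hQ)
    (fun t => hasDerivAt_matrixToCLM_of_entries (hM' t))
    (fun t => by simpa using congrArg (matrixToCLM ℝ (Fin m)) (hL t)) hy
    (hinit ▸ mulVec_one_sub_mulVec_eq_zero hidem c)
end

section
/- (Theorem 1, assertion 2, fundamental matrix relations) Let Y : ℝ → M_m(ℝ) be differentiable with Y'(t) = Q(t)·Y(t) for all t and Y(0) = E, and suppose M(t)·Y(t)·Φ⁺(0) = Y(t)·Φ⁺(0) for all t ∈ ℝ. Define X(t) := Φ(t)·Y(t)·Φ⁺(0) ∈ M_n(ℝ). Then X is differentiable with X'(t) = P(t)·X(t) for all t, where P(t) := (Φ'(t) + Φ(t)Q(t))·Φ⁺(t), X(0) = E_n, and Y(t)·Φ⁺(0) = Φ⁺(t)·X(t) for all t ∈ ℝ. -/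
open Matrix

/-!
Put `Z t = Y t * Φ⁺ 0`. Invariance says `Φ⁺ Φ Z = Z`, so `Z` is recovered from `X = Φ Z` as `Φ⁺ X`.
Substituting this into the product rule `X' = Φ' Z + Φ Q Z` yields `X' = (Φ' + Φ Q) Φ⁺ X`.
-/

section MatrixDeriv

variable {𝕜 R l m n : Type*} [NontriviallyNormedField 𝕜] [NormedRing R] [NormedAlgebra 𝕜 R]
  [Fintype m] {t : 𝕜}

theorem hasDerivAt_matrix_mul_apply {A : 𝕜 → Matrix l m R} {A' : Matrix l m R}
    {B : 𝕜 → Matrix m n R} {B' : Matrix m n R}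
    (hA : ∀ i j, HasDerivAt (fun s => A s i j) (A' i j) t)
    (hB : ∀ i j, HasDerivAt (fun s => B s i j) (B' i j) t) (i : l) (j : n) :
    HasDerivAt (fun s => (A s * B s) i j) ((A' * B t + A t * B') i j) t := by
  simp only [mul_apply, Matrix.add_apply, ← Finset.sum_add_distrib]
  exact HasDerivAt.fun_sum fun k _ => (hA i k).fun_mul (hB k j)

theorem hasDerivAt_matrix_mul_const_apply {A : 𝕜 → Matrix l m R} {A' : Matrix l m R}
    (hA : ∀ i j, HasDerivAt (fun s => A s i j) (A' i j) t) (C : Matrix m n R) (i : l) (j : n) :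
    HasDerivAt (fun s => (A s * C) i j) ((A' * C) i j) t := by
  simp only [mul_apply]
  exact HasDerivAt.fun_sum fun k _ => (hA i k).mul_const (C k j)

theorem hasDerivAt_matrix_mul_apply_of_invariant [Fintype l] {Q : Matrix m m R}
    {Φ : 𝕜 → Matrix l m R} {Φ' : Matrix l m R} {Φp : Matrix m l R} {Z : 𝕜 → Matrix m n R}
    (hΦ : ∀ i j, HasDerivAt (fun s => Φ s i j) (Φ' i j) t)
    (hZ : ∀ i j, HasDerivAt (fun s => Z s i j) ((Q * Z t) i j) t)
    (hinvar : Φp * (Φ t * Z t) = Z t) (i : l) (j : n) :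
    HasDerivAt (fun s => (Φ s * Z s) i j) (((Φ' + Φ t * Q) * Φp * (Φ t * Z t)) i j) t := by
  have reduced_rhs : (Φ' + Φ t * Q) * Φp * (Φ t * Z t) = Φ' * Z t + Φ t * (Q * Z t) := by
    rw [Matrix.mul_assoc _ Φp, hinvar, Matrix.add_mul, Matrix.mul_assoc]
  rw [reduced_rhs]
  exact hasDerivAt_matrix_mul_apply hΦ hZ i j

theorem fundamental_matrix_relations_general [Fintype n] [DecidableEq m] [DecidableEq n]
    {Q Y : 𝕜 → Matrix m m R} {Φ Φ' : 𝕜 → Matrix n m R} {Φp : 𝕜 → Matrix m n R} {t₀ : 𝕜}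
    (hΦ : ∀ t i j, HasDerivAt (fun s => Φ s i j) (Φ' t i j) t)
    (hpseudo : Φ t₀ * Φp t₀ = 1)
    (hY : ∀ t i j, HasDerivAt (fun s => Y s i j) ((Q t * Y t) i j) t)
    (hY₀ : Y t₀ = 1)
    (hinvar : ∀ t, Φp t * Φ t * Y t * Φp t₀ = Y t * Φp t₀) :
    (∀ t i j, HasDerivAt (fun s => (Φ s * Y s * Φp t₀) i j)
      (((Φ' t + Φ t * Q t) * Φp t * (Φ t * Y t * Φp t₀)) i j) t) ∧
    Φ t₀ * Y t₀ * Φp t₀ = 1 ∧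
    (∀ t, Y t * Φp t₀ = Φp t * (Φ t * Y t * Φp t₀)) := by
  simp only [Matrix.mul_assoc _ (Y _)] at hinvar ⊢
  have lift_reduced : ∀ t, Φp t * (Φ t * (Y t * Φp t₀)) = Y t * Φp t₀ := fun t => by
    rw [← Matrix.mul_assoc, hinvar]
  have hZ : ∀ t i j,
      HasDerivAt (fun s => (Y s * Φp t₀) i j) ((Q t * (Y t * Φp t₀)) i j) t := fun t => by
    rw [← Matrix.mul_assoc]
    exact hasDerivAt_matrix_mul_const_apply (hY t) (Φp t₀)
  refine ⟨fun t => ?_, ?_, fun t => (lift_reduced t).symm⟩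
  · exact hasDerivAt_matrix_mul_apply_of_invariant (hΦ t) (hZ t) (lift_reduced t)
  · rw [hY₀, Matrix.one_mul, hpseudo]

end MatrixDeriv

/-- Theorem 1, assertion 2, fundamental matrix relations: if `Mⁿ(t)` is invariant
(expressed via the fundamental matrix `Y` by `M(t)Y(t)Φ⁺(0) = Y(t)Φ⁺(0)`), then
`X(t) = Φ(t)Y(t)Φ⁺(0)` satisfies `X' = P(t)X`, `X(0) = Eₙ`, and
`Y(t)Φ⁺(0) = Φ⁺(t)X(t)`, where `P(t) = (Φ'(t) + Φ(t)Q(t))Φ⁺(t)`. -/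
theorem fundamental_matrix_relations (m n : ℕ) (hn : 1 ≤ n) (hnm : n < m)
    (Q : ℝ → Matrix (Fin m) (Fin m) ℝ)
    (Φ : ℝ → Matrix (Fin n) (Fin m) ℝ) (Φp : ℝ → Matrix (Fin m) (Fin n) ℝ)
    (Φ' : ℝ → Matrix (Fin n) (Fin m) ℝ) (Φp' : ℝ → Matrix (Fin m) (Fin n) ℝ)
    (hQ : ∀ i j, Continuous fun t => Q t i j)
    (hΦ : ∀ t i j, HasDerivAt (fun s => Φ s i j) (Φ' t i j) t)
    (hΦc : ∀ i j, Continuous fun t => Φ' t i j)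
    (hΦp : ∀ t i j, HasDerivAt (fun s => Φp s i j) (Φp' t i j) t)
    (hΦpc : ∀ i j, Continuous fun t => Φp' t i j)
    (hpseudo : ∀ t, Φ t * Φp t = 1)
    (M : ℝ → Matrix (Fin m) (Fin m) ℝ)
    (hM : ∀ t, M t = Φp t * Φ t)
    (Y : ℝ → Matrix (Fin m) (Fin m) ℝ)
    (hY : ∀ t i j, HasDerivAt (fun s => Y s i j) ((Q t * Y t) i j) t)
    (hY0 : Y 0 = 1)
    (hinvar : ∀ t, M t * Y t * Φp 0 = Y t * Φp 0)
    (X : ℝ → Matrix (Fin n) (Fin n) ℝ)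
    (hX : ∀ t, X t = Φ t * Y t * Φp 0)
    (P : ℝ → Matrix (Fin n) (Fin n) ℝ)
    (hP : ∀ t, P t = (Φ' t + Φ t * Q t) * Φp t) :
    (∀ t i j, HasDerivAt (fun s => X s i j) ((P t * X t) i j) t) ∧
    X 0 = 1 ∧
    (∀ t, Y t * Φp 0 = Φp t * X t) := by
  simp only [hX, hP]
  exact fundamental_matrix_relations_general hΦ (hpseudo 0) hY hY0 fun t => hM t ▸ hinvar t
end
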